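/- Let (X₁,X₂,X₃,X₄) be a centered Gaussian random vector in ℝ⁴ with nondegenerate components and correlation coefficients ρ_{1i} between X₁ and X_i. Then for every α₁ ∈ (0,1) and all positive even integers α₂,α₃,α₄, E[|X₁|^{-α₁}|X₂|^{α₂}|X₃|^{α₃}|X₄|^{α₄}] ≥ ∏_{i=2}^4 (1-ρ_{1i}²)^{α_i/2} · E[|X₁|^{-α₁}] · ∏_{i=2}^4 E[|X_i|^{α_i}]. -/

import Mathlib

open MeasureTheory Matrix

/-!
Realise `X` as `(⟪a i, Z⟫)ᵢ` for a standard Gaussian vector `Z` and write `a = a 0`. By the Gamma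
integral, `|⟪a, Z⟫| ^ (-s)` is a positive mixture over `t > 0` of the weights `exp (-t ⟪a, Z⟫ ^ 2)`.
Normalising such a weight turns the law of `Z` into that of `scaleAlong a c Z` for some
`c ∈ (0, 1]`: only the component along `a` shrinks. So it is enough to bound the even moment of the
three remaining factors from below, uniformly in `c`, for the vectors `scaleAlong a c (a i)`. Their
mixed moment is at least the product of their single moments, and these are at least the moments of
the projections of the `a i` onto `aᗮ`, which produce the factors `1 - ρ₁ᵢ ^ 2`.

The three-factor moment inequality goes by induction on one exponent. Minimise the mixed moment
over vectors of prescribed norms. At a minimiser, rotating one vector at a time gives first-order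
conditions; combined with Gaussian integration by parts they make the moments multiplying the
off-diagonal covariances vanish, unless two of the vectors are parallel, in which case only two
factors are left.
-/

namespace GaussianProduct

open ProbabilityTheory Real
open scoped ENNReal NNReal

lemma hasDerivAt_gaussianPDFReal_zero (v : ℝ≥0) (x : ℝ) :
    HasDerivAt (gaussianPDFReal 0 v) (-(x / v) * gaussianPDFReal 0 v x) x := by
  have h : HasDerivAt (fun y : ℝ ↦ -(y - 0) ^ 2 / (2 * v)) (-(x / v)) x := by
    convert! (((hasDerivAt_id x).sub_const 0).pow 2).neg.div_const (2 * (v : ℝ)) using 1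
    simp
    ring
  convert! h.exp.const_mul (√(2 * π * v))⁻¹ using 1
  rw [gaussianPDFReal]
  ring

lemma integrable_gaussianReal_iff {μ : ℝ} {v : ℝ≥0} (hv : v ≠ 0) {f : ℝ → ℝ} :
    Integrable f (gaussianReal μ v) ↔ Integrable fun x ↦ gaussianPDFReal μ v x * f x := by
  rw [gaussianReal_of_var_ne_zero μ hv,
    integrable_withDensity_iff_integrable_smul' (measurable_gaussianPDF μ v)
      (ae_of_all _ fun _ ↦ gaussianPDF_lt_top)]
  simp only [toReal_gaussianPDF, smul_eq_mul]

theorem integral_id_mul_gaussianReal (v : ℝ≥0) {f f' : ℝ → ℝ}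
    (hf : ∀ x, HasDerivAt f (f' x) x) (hf_int : Integrable f (gaussianReal 0 v))
    (hxf_int : Integrable (fun x ↦ x * f x) (gaussianReal 0 v))
    (hf'_int : Integrable f' (gaussianReal 0 v)) :
    ∫ x, x * f x ∂gaussianReal 0 v = v * ∫ x, f' x ∂gaussianReal 0 v := by
  rcases eq_or_ne v 0 with rfl | hv
  · simp
  have hv' : (v : ℝ) ≠ 0 := by exact_mod_cast hv
  rw [integrable_gaussianReal_iff hv] at hf_int hxf_int hf'_int
  have hderiv x : HasDerivAt (fun y ↦ gaussianPDFReal 0 v y * f y)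
      (gaussianPDFReal 0 v x * f' x - (v : ℝ)⁻¹ * (gaussianPDFReal 0 v x * (x * f x))) x := by
    convert! (hasDerivAt_gaussianPDFReal_zero v x).mul (hf x) using 1
    ring
  have hzero := integral_eq_zero_of_hasDerivAt_of_integrable hderiv
    (hf'_int.sub (hxf_int.const_mul _)) hf_int
  rw [integral_sub hf'_int (hxf_int.const_mul _), integral_const_mul, sub_eq_zero] at hzero
  simp only [integral_gaussianReal_eq_integral_smul hv, smul_eq_mul]
  rw [hzero, mul_inv_cancel_left₀ hv']

lemma lintegral_exp_neg_mul_sq_gaussianReal {v : ℝ≥0} (hv : v ≠ 0) {t : ℝ} (ht : 0 ≤ t)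
    {f : ℝ → ℝ≥0∞} (hf : Measurable f) :
    ∫⁻ x, ENNReal.ofReal (exp (-t * x ^ 2)) * f x ∂gaussianReal 0 v =
      ENNReal.ofReal (√(1 + 2 * t * v))⁻¹ *
        ∫⁻ x, f ((√(1 + 2 * t * v))⁻¹ * x) ∂gaussianReal 0 v := by
  set c := (√(1 + 2 * t * v))⁻¹ with hc
  have hc0 : 0 < c := by positivity
  have hc2 : c ^ 2 = (1 + 2 * t * v)⁻¹ := by rw [hc, inv_pow, sq_sqrt (by positivity)]
  have hv' : (v : ℝ) ≠ 0 := by exact_mod_cast hv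
  set w : ℝ≥0 := .mk (c ^ 2) (sq_nonneg c) * v with hw
  have hw' : (w : ℝ) = v / (1 + 2 * t * v) := by
    rw [hw, NNReal.coe_mul, NNReal.coe_mk, hc2, div_eq_inv_mul]
  have hw0 : w ≠ 0 := mul_ne_zero (by rw [ne_eq, ← NNReal.coe_eq_zero]; simp [hc0.ne']) hv
  have hpdf x : gaussianPDFReal 0 v x * exp (-t * x ^ 2) = c * gaussianPDFReal 0 w x := by
    have hexp : -(x - 0) ^ 2 / (2 * v) + -t * x ^ 2 = -(x - 0) ^ 2 / (2 * w) := by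
      rw [hw']; field_simp; ring
    have hroot : √(2 * π * w) = c * √(2 * π * v) := by
      rw [hw, NNReal.coe_mul, NNReal.coe_mk, mul_left_comm, sqrt_mul (by positivity),
        sqrt_sq hc0.le]
    rw [gaussianPDFReal, gaussianPDFReal, mul_assoc, ← exp_add, hexp, hroot]
    field_simp
  have hmap : ∫⁻ x, f (c * x) ∂gaussianReal 0 v = ∫⁻ x, f x ∂gaussianReal 0 w := by
    rw [← lintegral_map hf (measurable_const_mul c), gaussianReal_map_const_mul, mul_zero]
  rw [hmap, gaussianReal_of_var_ne_zero 0 hv, gaussianReal_of_var_ne_zero 0 hw0,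
    lintegral_withDensity_eq_lintegral_mul _ (measurable_gaussianPDF 0 v) (by fun_prop),
    lintegral_withDensity_eq_lintegral_mul _ (measurable_gaussianPDF 0 w) hf,
    ← lintegral_const_mul _ (by fun_prop)]
  refine lintegral_congr fun x ↦ ?_
  simp only [Pi.mul_apply, gaussianPDF, ← mul_assoc]
  rw [← ENNReal.ofReal_mul (gaussianPDFReal_nonneg 0 v x), hpdf, ENNReal.ofReal_mul hc0.le]

lemma lintegral_rpow_mul_exp_neg_mul_sq {s x : ℝ} (hs : 0 < s) (hx : x ≠ 0) :
    ∫⁻ t in Set.Ioi 0, ENNReal.ofReal (t ^ (s / 2 - 1)) * ENNReal.ofReal (exp (-t * x ^ 2)) =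
      ENNReal.ofReal (|x| ^ (-s)) * ENNReal.ofReal (Gamma (s / 2)) := by
  have hpow : (1 / x ^ 2) ^ (s / 2) = |x| ^ (-s) := by
    rw [← sq_abs, one_div, inv_rpow (by positivity), ← rpow_natCast_mul (abs_nonneg x),
      Nat.cast_ofNat, mul_div_cancel₀ s two_ne_zero, rpow_neg (abs_nonneg x)]
  have hgamma := integral_rpow_mul_exp_neg_mul_Ioi (half_pos hs) (sq_pos_of_ne_zero hx)
  rw [hpow] at hgamma
  have hpos : 0 < |x| ^ (-s) * Gamma (s / 2) :=
    mul_pos (rpow_pos_of_pos (abs_pos.2 hx) _) (Gamma_pos_of_pos (half_pos hs))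
  have hL1 : IntegrableOn (fun t ↦ t ^ (s / 2 - 1) * exp (-(x ^ 2 * t))) (Set.Ioi 0) :=
    .of_integral_ne_zero (hgamma ▸ hpos.ne')
  rw [← ENNReal.ofReal_mul (by positivity), ← hgamma, ofReal_integral_eq_lintegral_ofReal hL1]
  · refine setLIntegral_congr_fun measurableSet_Ioi fun t ht ↦ ?_
    rw [← ENNReal.ofReal_mul (rpow_nonneg (Set.mem_Ioi.1 ht).le _)]
    ring_nf
  · filter_upwards [self_mem_ae_restrict measurableSet_Ioi] with t ht
    exact mul_nonneg (rpow_nonneg (Set.mem_Ioi.1 ht).le _) (exp_nonneg _)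

lemma lintegral_abs_rpow_neg_mul {ν : Measure ℝ} [SFinite ν] [NullSingletonClass ν]
    {s : ℝ} (hs : 0 < s) {f : ℝ → ℝ≥0∞} (hf : Measurable f) :
    (∫⁻ x, ENNReal.ofReal (|x| ^ (-s)) * f x ∂ν) * ENNReal.ofReal (Gamma (s / 2)) =
      ∫⁻ t in Set.Ioi 0, ENNReal.ofReal (t ^ (s / 2 - 1)) *
        ∫⁻ x, ENNReal.ofReal (exp (-t * x ^ 2)) * f x ∂ν := by
  have hne : ∀ᵐ x ∂ν, x ≠ 0 := by simp [ae_iff]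
  calc
    _ = ∫⁻ x, (∫⁻ t in Set.Ioi 0, ENNReal.ofReal (t ^ (s / 2 - 1)) *
          ENNReal.ofReal (exp (-t * x ^ 2))) * f x ∂ν := by
      rw [← lintegral_mul_const _ (by fun_prop)]
      refine lintegral_congr_ae (hne.mono fun x hx ↦ ?_)
      simp only [lintegral_rpow_mul_exp_neg_mul_sq hs hx]
      ring
    _ = ∫⁻ x, (∫⁻ t in Set.Ioi 0, ENNReal.ofReal (t ^ (s / 2 - 1)) *
          (ENNReal.ofReal (exp (-t * x ^ 2)) * f x)) ∂ν := by
      refine lintegral_congr fun x ↦ ?_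
      rw [← lintegral_mul_const _ (by fun_prop)]
      simp only [mul_assoc]
    _ = _ := by
      rw [lintegral_lintegral_swap (by fun_prop)]
      refine lintegral_congr fun t ↦ ?_
      rw [lintegral_const_mul _ (by fun_prop)]

theorem mul_lintegral_abs_rpow_neg_gaussianReal_le {v : ℝ≥0} (hv : v ≠ 0) {s : ℝ} (hs : 0 < s)
    {f : ℝ → ℝ≥0∞} (hf : Measurable f) {K : ℝ≥0∞}
    (hK : ∀ c ∈ Set.Ioc (0 : ℝ) 1, K ≤ ∫⁻ x, f (c * x) ∂gaussianReal 0 v) :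
    K * ∫⁻ x, ENNReal.ofReal (|x| ^ (-s)) ∂gaussianReal 0 v ≤
      ∫⁻ x, ENNReal.ofReal (|x| ^ (-s)) * f x ∂gaussianReal 0 v := by
  have := nullSingletonClass_gaussianReal (μ := 0) hv
  have hgamma : ENNReal.ofReal (Gamma (s / 2)) ≠ 0 := by
    simpa using Gamma_pos_of_pos (half_pos hs)
  rw [← ENNReal.mul_le_mul_iff_left hgamma ENNReal.ofReal_ne_top, mul_assoc,
    lintegral_abs_rpow_neg_mul hs hf]
  have hone := lintegral_abs_rpow_neg_mul (ν := gaussianReal 0 v) hs measurable_one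
  simp only [Pi.one_apply, mul_one] at hone
  rw [hone, ← lintegral_const_mul _ (by fun_prop)]
  refine setLIntegral_mono' measurableSet_Ioi fun t ht ↦ ?_
  have ht0 : 0 ≤ t := (Set.mem_Ioi.1 ht).le
  have hone_t := lintegral_exp_neg_mul_sq_gaussianReal hv ht0 (measurable_one (α := ℝ≥0∞))
  simp only [Pi.one_apply, mul_one, lintegral_const, measure_univ] at hone_t
  rw [hone_t, lintegral_exp_neg_mul_sq_gaussianReal hv ht0 hf, mul_left_comm, mul_comm K]
  gcongr
  refine hK _ ⟨by positivity, inv_le_one_of_one_le₀ (one_le_sqrt.2 ?_)⟩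
  have : 0 ≤ 2 * t * v := by positivity
  linarith

section GaussianVector

open scoped RealInnerProductSpace

variable {E : Type*} [NormedAddCommGroup E] [InnerProductSpace ℝ E]

lemma norm_sq_starProjection_orthogonal_singleton (a u : E) :
    ‖(ℝ ∙ a)ᗮ.starProjection u‖ ^ 2 = ‖u‖ ^ 2 - ⟪a, u⟫ ^ 2 / ‖a‖ ^ 2 := by
  rw [Submodule.norm_sq_eq_add_norm_sq_starProjection u (ℝ ∙ a),
    Submodule.starProjection_singleton]
  rcases eq_or_ne a 0 with rfl | ha
  · simp
  · have := norm_ne_zero_iff.2 ha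
    simp only [RCLike.ofReal_real_eq_id, id_eq, norm_smul, norm_div, norm_pow,
      mul_pow, div_pow, norm_eq_abs, sq_abs]
    field_simp
    ring

/-- The self-adjoint operator that multiplies the component along `a` by `c` and fixes `aᗮ`. It
describes the effect on a standard Gaussian vector of the weight `exp (-t ⟪a, ·⟫ ^ 2)`, normalised,
for `c = (1 + 2 t ‖a‖ ^ 2) ^ (-1 / 2)`. -/
noncomputable def scaleAlong (a : E) (c : ℝ) : E →L[ℝ] E :=
  c • (ℝ ∙ a).starProjection + (ℝ ∙ a)ᗮ.starProjection

lemma inner_scaleAlong_left (a u x : E) (c : ℝ) :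
    ⟪scaleAlong a c u, x⟫ = ⟪u, scaleAlong a c x⟫ := by
  simp only [scaleAlong, _root_.add_apply, _root_.smul_apply,
    inner_add_left, inner_add_right, real_inner_smul_left, real_inner_smul_right,
    Submodule.inner_starProjection_left_eq_right]

lemma norm_starProjection_orthogonal_le_norm_scaleAlong (a u : E) (c : ℝ) :
    ‖(ℝ ∙ a)ᗮ.starProjection u‖ ≤ ‖scaleAlong a c u‖ := by
  have h : (ℝ ∙ a)ᗮ.starProjection (scaleAlong a c u) = (ℝ ∙ a)ᗮ.starProjection u := by
    have hidem := (ℝ ∙ a).starProjection_eq_self_iff.2 ((ℝ ∙ a).starProjection_apply_mem u)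
    simp [scaleAlong, Submodule.starProjection_orthogonal_val, hidem]
  rw [← h]
  exact Submodule.norm_starProjection_apply_le _ _

/-- The vector `y` with its coordinate `⟪a, ·⟫` replaced by `r` and its component in `aᗮ` kept. It
disintegrates the standard Gaussian measure along `⟪a, ·⟫`. For `a = 0` it is `y`, for every `r`. -/
noncomputable def updateAlong (a : E) (r : ℝ) (y : E) : E :=
  (r / ‖a‖ ^ 2) • a + (ℝ ∙ a)ᗮ.starProjection y

lemma inner_updateAlong {a : E} (ha : a ≠ 0) (r : ℝ) (y : E) : ⟪a, updateAlong a r y⟫ = r := by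
  rw [updateAlong, inner_add_right, real_inner_smul_right, real_inner_self_eq_norm_sq,
    div_mul_cancel₀ _ (pow_ne_zero 2 (norm_ne_zero_iff.2 ha)), add_eq_left]
  exact Submodule.mem_orthogonal_singleton_iff_inner_right.1
    (Submodule.starProjection_apply_mem _ _)

lemma scaleAlong_updateAlong (a y : E) (c r : ℝ) :
    scaleAlong a c (updateAlong a r y) = updateAlong a (c * r) y := by
  have ha := (ℝ ∙ a).starProjection_eq_self_iff.2 (Submodule.mem_span_singleton_self a)
  have hidem := (ℝ ∙ a).starProjection_eq_self_iff.2 ((ℝ ∙ a).starProjection_apply_mem y)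
  simp [scaleAlong, updateAlong, Submodule.starProjection_orthogonal_val, mul_smul, mul_div_assoc,
    ha, hidem]

lemma hasDerivAt_comp_updateAlong {e : E} {f f' : E → ℝ}
    (hf : ∀ x, HasLineDerivAt ℝ f (f' x) x e) (y : E) (r : ℝ) :
    HasDerivAt (fun s ↦ f (updateAlong e s y)) (f' (updateAlong e r y) / ‖e‖ ^ 2) r := by
  have hline (s : ℝ) :
      updateAlong e s y = updateAlong e r y + ((s - r) / ‖e‖ ^ 2) • e := by
    rw [updateAlong, updateAlong, sub_div, sub_smul]
    abel
  have hcomp := HasDerivAt.comp_of_eq r (hf (updateAlong e r y))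
    (((hasDerivAt_id r).sub_const r).div_const (‖e‖ ^ 2)) (by simp)
  simpa only [Function.comp_def, id, ← hline, mul_one_div] using hcomp

variable [FiniteDimensional ℝ E] [MeasurableSpace E] [BorelSpace E]

@[fun_prop]
lemma measurable_updateAlong {α : Type*} [MeasurableSpace α] (a : E) {r : α → ℝ} {y : α → E}
    (hr : Measurable r) (hy : Measurable y) : Measurable fun z ↦ updateAlong a (r z) (y z) := by
  unfold updateAlong
  fun_prop

theorem measurePreserving_updateAlong (a : E) :
    MeasurePreserving (fun z : ℝ × E ↦ updateAlong a z.1 z.2)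
      ((gaussianReal 0 (‖a‖₊ ^ 2)).prod (stdGaussian E)) (stdGaussian E) := by
  refine ⟨by fun_prop, Measure.ext_of_charFun (funext fun t ↦ ?_)⟩
  have hsplit (z : ℝ × E) : ⟪updateAlong a z.1 z.2, t⟫ =
      ⟪a, t⟫ / ‖a‖ ^ 2 * z.1 + ⟪z.2, (ℝ ∙ a)ᗮ.starProjection t⟫ := by
    rw [updateAlong, inner_add_left, real_inner_smul_left,
      Submodule.inner_starProjection_left_eq_right]
    ring
  have hvar : (‖a‖ : ℂ) ^ 2 * (⟪a, t⟫ / ‖a‖ ^ 2) ^ 2 = ⟪a, t⟫ ^ 2 / ‖a‖ ^ 2 := by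
    rcases eq_or_ne a 0 with rfl | ha
    · simp
    · have : (‖a‖ : ℂ) ≠ 0 := by simpa using ha
      field_simp
  rw [charFun_apply, integral_map (Measurable.aemeasurable (by fun_prop)) (by fun_prop)]
  simp only [hsplit, Complex.ofReal_add, Complex.ofReal_mul, add_mul, Complex.exp_add]
  rw [integral_prod_mul (fun s : ℝ ↦ Complex.exp ((⟪a, t⟫ / ‖a‖ ^ 2 : ℝ) * s * Complex.I))
      (fun y : E ↦ Complex.exp (⟪y, (ℝ ∙ a)ᗮ.starProjection t⟫ * Complex.I)),
    ← charFun_apply_real, ← charFun_apply, charFun_gaussianReal, charFun_stdGaussian,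
    charFun_stdGaussian, ← Complex.exp_add]
  congr 1
  norm_cast
  rw [norm_sq_starProjection_orthogonal_singleton]
  push_cast
  linear_combination (-1 / 2) * hvar

lemma lintegral_stdGaussian_eq_lintegral_updateAlong (a : E) {F : E → ℝ≥0∞} (hF : Measurable F) :
    ∫⁻ x, F x ∂stdGaussian E =
      ∫⁻ r, ∫⁻ y, F (updateAlong a r y) ∂stdGaussian E ∂gaussianReal 0 (‖a‖₊ ^ 2) := by
  rw [← (measurePreserving_updateAlong a).lintegral_comp hF, lintegral_prod _ (by fun_prop)]

theorem mul_lintegral_abs_inner_rpow_neg_le {a : E} (ha : a ≠ 0) {s : ℝ} (hs : 0 < s)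
    {F : E → ℝ≥0∞} (hF : Measurable F) {K : ℝ≥0∞}
    (hK : ∀ c ∈ Set.Ioc (0 : ℝ) 1, K ≤ ∫⁻ x, F (scaleAlong a c x) ∂stdGaussian E) :
    K * ∫⁻ x, ENNReal.ofReal (|⟪a, x⟫| ^ (-s)) ∂stdGaussian E ≤
      ∫⁻ x, ENNReal.ofReal (|⟪a, x⟫| ^ (-s)) * F x ∂stdGaussian E := by
  rw [lintegral_stdGaussian_eq_lintegral_updateAlong a (by fun_prop),
    lintegral_stdGaussian_eq_lintegral_updateAlong a (by fun_prop)]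
  have hpull (r : ℝ) :
      ∫⁻ y, ENNReal.ofReal (|r| ^ (-s)) * F (updateAlong a r y) ∂stdGaussian E =
        ENNReal.ofReal (|r| ^ (-s)) * ∫⁻ y, F (updateAlong a r y) ∂stdGaussian E :=
    lintegral_const_mul _ (by fun_prop)
  simp only [inner_updateAlong ha, lintegral_const, measure_univ, mul_one, hpull]
  refine mul_lintegral_abs_rpow_neg_gaussianReal_le (by simpa using ha) hs
    (Measurable.lintegral_prod_right' (f := fun z : ℝ × E ↦ F (updateAlong a z.1 z.2))
      (by fun_prop)) fun c hc ↦ (hK c hc).trans_eq ?_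
  rw [lintegral_stdGaussian_eq_lintegral_updateAlong a (by fun_prop)]
  simp only [scaleAlong_updateAlong]

theorem integral_inner_mul_stdGaussian {e : E} {f f' : E → ℝ}
    (hf : ∀ x, HasLineDerivAt ℝ f (f' x) x e) (hf_int : Integrable f (stdGaussian E))
    (hef_int : Integrable (fun x ↦ ⟪e, x⟫ * f x) (stdGaussian E))
    (hf'_int : Integrable f' (stdGaussian E)) :
    ∫ x, ⟪e, x⟫ * f x ∂stdGaussian E = ∫ x, f' x ∂stdGaussian E := by
  rcases eq_or_ne e 0 with rfl | he
  · have hf' x : f' x = 0 := (hf x).unique (hasLineDerivAt_zero)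
    simp [hf']
  have hmp := measurePreserving_updateAlong e
  have hfibre {g : E → ℝ} (hg : Integrable g (stdGaussian E)) : ∀ᵐ y ∂stdGaussian E,
      Integrable (fun r ↦ g (updateAlong e r y)) (gaussianReal 0 (‖e‖₊ ^ 2)) :=
    (hmp.integrable_comp_of_integrable hg).prod_left_ae
  have hiter {g : E → ℝ} (hg : Integrable g (stdGaussian E)) : ∫ x, g x ∂stdGaussian E =
      ∫ y, ∫ r, g (updateAlong e r y) ∂gaussianReal 0 (‖e‖₊ ^ 2) ∂stdGaussian E := by
    refine Eq.trans ?_ (integral_prod_symm _ (hmp.integrable_comp_of_integrable hg))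
    nth_rw 1 [← hmp.map_eq]
    exact integral_map hmp.aemeasurable (by rw [hmp.map_eq]; exact hg.1)
  rw [hiter hef_int, hiter hf'_int]
  refine integral_congr_ae ?_
  filter_upwards [hfibre hf_int, hfibre hef_int, hfibre hf'_int] with y hy hey hy'
  simp only [inner_updateAlong he] at hey ⊢
  rw [integral_id_mul_gaussianReal _ (hasDerivAt_comp_updateAlong hf y) hy hey (hy'.div_const _),
    integral_div, NNReal.coe_pow, coe_nnnorm,
    mul_div_cancel₀ _ (pow_ne_zero 2 (norm_ne_zero_iff.2 he))]

end GaussianVector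

section FiniteMoments

variable {Ω : Type*} [MeasurableSpace Ω] {μ : Measure Ω} [IsFiniteMeasure μ]

/-- The algebra of real random variables with finite absolute moments of every order, in which
integrability of polynomial expressions in Gaussian variables is a membership. -/
def finiteMoments (μ : Measure Ω) [IsFiniteMeasure μ] : Subalgebra ℝ (Ω → ℝ) where
  carrier := {f | ∀ p : ℝ≥0∞, p ≠ ∞ → MemLp f p μ}
  mul_mem' {f g} hf hg p hp := by
    have : ENNReal.HolderTriple (2 * p) (2 * p) p :=
      ⟨by rw [ENNReal.mul_inv (by simp) (by simp), ← add_mul, ENNReal.inv_two_add_inv_two, one_mul]⟩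
    have h2p : 2 * p ≠ ∞ := ENNReal.mul_ne_top ENNReal.ofNat_ne_top hp
    exact (hg _ h2p).mul (hf _ h2p)
  add_mem' hf hg p hp := (hf p hp).add (hg p hp)
  algebraMap_mem' r _ _ := memLp_const r

lemma integrable_of_mem_finiteMoments {f : Ω → ℝ} (hf : f ∈ finiteMoments μ) : Integrable f μ :=
  memLp_one_iff_integrable.1 (hf 1 ENNReal.one_ne_top)

lemma abs_mem_finiteMoments {f : Ω → ℝ} (hf : f ∈ finiteMoments μ) : |f| ∈ finiteMoments μ :=
  fun p hp ↦ (hf p hp).abs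

lemma hasDerivAt_integral_cos_mul_add_sin_mul_pow {f g φ : Ω → ℝ} (hf : f ∈ finiteMoments μ)
    (hg : g ∈ finiteMoments μ) (hφ : φ ∈ finiteMoments μ) (n : ℕ) :
    HasDerivAt (fun t ↦ ∫ x, (cos t * f x + sin t * g x) ^ (n + 1) * φ x ∂μ)
      ((n + 1) * ∫ x, f x ^ n * g x * φ x ∂μ) 0 := by
  have hmem (a b : ℝ) : a • f + b • g ∈ finiteMoments μ :=
    add_mem (Subalgebra.smul_mem _ hf a) (Subalgebra.smul_mem _ hg b)
  have hL1 (t : ℝ) : Integrable (fun x ↦ (cos t * f x + sin t * g x) ^ (n + 1) * φ x) μ :=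
    integrable_of_mem_finiteMoments (mul_mem (pow_mem (hmem (cos t) (sin t)) (n + 1)) hφ)
  have hcomb (a b : ℝ) (ha : |a| ≤ 1) (hb : |b| ≤ 1) (x : Ω) :
      |a * f x + b * g x| ≤ |f x| + |g x| := by
    refine (abs_add_le _ _).trans (add_le_add ?_ ?_) <;> rw [abs_mul]
    exacts [mul_le_of_le_one_left (abs_nonneg _) ha, mul_le_of_le_one_left (abs_nonneg _) hb]
  have hderiv (x : Ω) (t : ℝ) : HasDerivAt (fun s ↦ (cos s * f x + sin s * g x) ^ (n + 1) * φ x)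
      ((n + 1) * ((cos t * f x + sin t * g x) ^ n * (-sin t * f x + cos t * g x) * φ x)) t := by
    convert! ((((hasDerivAt_cos t).mul_const (f x)).fun_add
      ((hasDerivAt_sin t).mul_const (g x))).fun_pow (n + 1)).mul_const (φ x) using 1
    rw [Nat.add_sub_cancel]
    push_cast
    ring
  have hbound_int : Integrable (fun x ↦ (n + 1) * ((|f x| + |g x|) ^ (n + 1) * |φ x|)) μ :=
    integrable_of_mem_finiteMoments (Subalgebra.smul_mem _ (mul_mem (pow_mem (add_mem
      (abs_mem_finiteMoments hf) (abs_mem_finiteMoments hg)) (n + 1))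
      (abs_mem_finiteMoments hφ)) (n + 1 : ℝ))
  have hbound (x : Ω) (t : ℝ) :
      ‖(n + 1) * ((cos t * f x + sin t * g x) ^ n * (-sin t * f x + cos t * g x) * φ x)‖ ≤
        (n + 1) * ((|f x| + |g x|) ^ (n + 1) * |φ x|) := by
    have hcos := abs_cos_le_one t
    have hsin := abs_sin_le_one t
    rw [norm_eq_abs, abs_mul, abs_mul, abs_mul, abs_pow, pow_succ,
      abs_of_nonneg (by positivity : (0 : ℝ) ≤ n + 1)]
    gcongr
    exacts [hcomb _ _ hcos hsin x, hcomb _ _ (by rwa [abs_neg]) hcos x]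
  have h := (hasDerivAt_integral_of_dominated_loc_of_deriv_le Filter.univ_mem
    (.of_forall fun t ↦ (hL1 t).aestronglyMeasurable) (hL1 0)
    (integrable_of_mem_finiteMoments (Subalgebra.smul_mem _ (mul_mem (mul_mem
      (pow_mem (hmem (cos 0) (sin 0)) n) (hmem (-sin 0) (cos 0))) hφ)
      (n + 1 : ℝ))).aestronglyMeasurable
    (ae_of_all _ fun x t _ ↦ hbound x t) hbound_int (ae_of_all _ fun x t _ ↦ hderiv x t)).2
  simpa [integral_const_mul] using h

end FiniteMoments

section MixedMoments

open scoped RealInnerProductSpace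

variable {E : Type*} [NormedAddCommGroup E] [InnerProductSpace ℝ E]

lemma norm_cos_smul_add_sin_smul {u e : E} (he : ⟪u, e⟫ = 0) (hnorm : ‖e‖ = ‖u‖) (t : ℝ) :
    ‖cos t • u + sin t • e‖ = ‖u‖ := by
  rw [← sq_eq_sq₀ (norm_nonneg _) (norm_nonneg _), norm_add_sq_real, real_inner_smul_left,
    real_inner_smul_right, he, norm_smul, norm_smul, hnorm, norm_eq_abs, norm_eq_abs, mul_pow,
    mul_pow, sq_abs, sq_abs]
  linear_combination ‖u‖ ^ 2 * cos_sq_add_sin_sq t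

lemma mem_span_singleton_iff_forall_inner_eq_zero {x y : E} :
    y ∈ ℝ ∙ x ↔ ∀ e : E, ⟪x, e⟫ = 0 → ⟪e, y⟫ = 0 := by
  conv_lhs => rw [← (ℝ ∙ x).orthogonal_orthogonal, Submodule.mem_orthogonal]
  simp only [Submodule.mem_orthogonal_singleton_iff_inner_right]

variable [FiniteDimensional ℝ E] [MeasurableSpace E]

/-- The moment `𝔼[⟪u, Z⟫ ^ i * ⟪v, Z⟫ ^ j * ⟪w, Z⟫ ^ k]` of a standard Gaussian vector `Z`, to be
minimised over vectors `u`, `v`, `w` of given norms. -/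
noncomputable def mixedMoment (u v w : E) (i j k : ℕ) : ℝ :=
  ∫ x, ⟪u, x⟫ ^ i * ⟪v, x⟫ ^ j * ⟪w, x⟫ ^ k ∂stdGaussian E

lemma mixedMoment_swap_left (u v w : E) (i j k : ℕ) :
    mixedMoment u v w i j k = mixedMoment v u w j i k := by
  simp only [mixedMoment, mul_comm (⟪u, _⟫ ^ i)]

lemma mixedMoment_swap_right (u v w : E) (i j k : ℕ) :
    mixedMoment u v w i j k = mixedMoment u w v i k j := by
  simp only [mixedMoment, mul_right_comm]

lemma mixedMoment_even_nonneg (u v w : E) (p q r : ℕ) :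
    0 ≤ mixedMoment u v w (2 * p) (2 * q) (2 * r) :=
  integral_nonneg fun x ↦ by simp only [pow_mul]; positivity

variable [BorelSpace E]

lemma inner_mem_finiteMoments (u : E) : (⟪u, ·⟫) ∈ finiteMoments (stdGaussian E) :=
  fun p hp ↦ (IsGaussian.memLp_id (stdGaussian E) p hp).const_inner u

lemma monomial_mem_finiteMoments (u v w : E) (i j k : ℕ) :
    (fun x ↦ ⟪u, x⟫ ^ i * ⟪v, x⟫ ^ j * ⟪w, x⟫ ^ k) ∈ finiteMoments (stdGaussian E) :=
  mul_mem (mul_mem (pow_mem (inner_mem_finiteMoments u) i) (pow_mem (inner_mem_finiteMoments v) j))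
    (pow_mem (inner_mem_finiteMoments w) k)

theorem integral_inner_mul_monomial (e u v w : E) (i j k : ℕ) :
    ∫ x, ⟪e, x⟫ * (⟪u, x⟫ ^ i * ⟪v, x⟫ ^ j * ⟪w, x⟫ ^ k) ∂stdGaussian E =
      i * ⟪e, u⟫ * mixedMoment u v w (i - 1) j k + j * ⟪e, v⟫ * mixedMoment u v w i (j - 1) k +
        k * ⟪e, w⟫ * mixedMoment u v w i j (k - 1) := by
  have hderiv (x : E) : HasLineDerivAt ℝ (fun y ↦ ⟪u, y⟫ ^ i * ⟪v, y⟫ ^ j * ⟪w, y⟫ ^ k)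
      (i * ⟪e, u⟫ * (⟪u, x⟫ ^ (i - 1) * ⟪v, x⟫ ^ j * ⟪w, x⟫ ^ k) +
        j * ⟪e, v⟫ * (⟪u, x⟫ ^ i * ⟪v, x⟫ ^ (j - 1) * ⟪w, x⟫ ^ k) +
        k * ⟪e, w⟫ * (⟪u, x⟫ ^ i * ⟪v, x⟫ ^ j * ⟪w, x⟫ ^ (k - 1))) x e := by
    have hline (z : E) (n : ℕ) : HasDerivAt (fun t : ℝ ↦ ⟪z, x + t • e⟫ ^ n)
        (n * ⟪z, x⟫ ^ (n - 1) * ⟪e, z⟫) 0 := by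
      simp only [inner_add_right, real_inner_smul_right, real_inner_comm z e]
      simpa using (((hasDerivAt_id (0 : ℝ)).mul_const ⟪z, e⟫).const_add ⟪z, x⟫).fun_pow n
    refine (((hline u i).fun_mul (hline v j)).fun_mul (hline w k)).congr_deriv ?_
    simp only [zero_smul, add_zero]
    ring
  have hL1 (i j k : ℕ) := integrable_of_mem_finiteMoments (monomial_mem_finiteMoments u v w i j k)
  rw [integral_inner_mul_stdGaussian hderiv (hL1 i j k)
      (integrable_of_mem_finiteMoments (mul_mem (inner_mem_finiteMoments e)
        (monomial_mem_finiteMoments u v w i j k)))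
      ((((hL1 _ _ _).const_mul _).fun_add ((hL1 _ _ _).const_mul _)).fun_add
        ((hL1 _ _ _).const_mul _)),
    integral_add (((hL1 _ _ _).const_mul _).fun_add ((hL1 _ _ _).const_mul _))
      ((hL1 _ _ _).const_mul _),
    integral_add ((hL1 _ _ _).const_mul _) ((hL1 _ _ _).const_mul _)]
  simp only [integral_const_mul, mixedMoment]

lemma mixedMoment_succ_left (u v w : E) (i j k : ℕ) :
    mixedMoment u v w (i + 1) j k =
      i * ‖u‖ ^ 2 * mixedMoment u v w (i - 1) j k +
        j * ⟪u, v⟫ * mixedMoment u v w i (j - 1) k +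
        k * ⟪u, w⟫ * mixedMoment u v w i j (k - 1) := by
  rw [← real_inner_self_eq_norm_sq, ← integral_inner_mul_monomial]
  simp only [mixedMoment, pow_succ', mul_assoc]

lemma integral_inner_pow_succ_mul_inner_pow (u v : E) (i j : ℕ) :
    ∫ x, ⟪u, x⟫ ^ (i + 1) * ⟪v, x⟫ ^ j ∂stdGaussian E =
      i * ‖u‖ ^ 2 * ∫ x, ⟪u, x⟫ ^ (i - 1) * ⟪v, x⟫ ^ j ∂stdGaussian E +
        j * ⟪u, v⟫ * ∫ x, ⟪u, x⟫ ^ i * ⟪v, x⟫ ^ (j - 1) ∂stdGaussian E := by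
  simpa [mixedMoment] using mixedMoment_succ_left u v 0 i j 0

lemma integral_inner_pow_add_two (u : E) (n : ℕ) :
    ∫ x, ⟪u, x⟫ ^ (n + 2) ∂stdGaussian E =
      (n + 1) * ‖u‖ ^ 2 * ∫ x, ⟪u, x⟫ ^ n ∂stdGaussian E := by
  simpa using integral_inner_pow_succ_mul_inner_pow u 0 (n + 1) 0

open scoped Nat in
theorem integral_inner_pow_two_mul (u : E) (p : ℕ) :
    ∫ x, ⟪u, x⟫ ^ (2 * p) ∂stdGaussian E = (2 * p - 1)‼ * ‖u‖ ^ (2 * p) := by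
  induction p with
  | zero => simp
  | succ p ih =>
    rw [mul_add_one, integral_inner_pow_add_two, ih, show 2 * p + 2 - 1 = 2 * p + 1 by lia,
      Nat.doubleFactorial_add_one]
    push_cast
    ring

lemma inner_mul_integral_odd_pow_mul_odd_pow_nonneg (u v : E) (p q : ℕ) :
    0 ≤ ⟪u, v⟫ * ∫ x, ⟪u, x⟫ ^ (2 * p + 1) * ⟪v, x⟫ ^ (2 * q + 1) ∂stdGaussian E := by
  have heven (p : ℕ) : 0 ≤ ∫ x, ⟪u, x⟫ ^ (2 * p) * ⟪v, x⟫ ^ (2 * q) ∂stdGaussian E :=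
    integral_nonneg fun x ↦ by simp only [pow_mul]; positivity
  have hsplit (p : ℕ) (c m : ℝ) : ⟪u, v⟫ * (c * ‖u‖ ^ 2 * m + (2 * q + 1 : ℕ) * ⟪u, v⟫ *
      ∫ x, ⟪u, x⟫ ^ (2 * p) * ⟪v, x⟫ ^ (2 * q) ∂stdGaussian E) =
        c * ‖u‖ ^ 2 * (⟪u, v⟫ * m) + (2 * q + 1 : ℕ) * ⟪u, v⟫ ^ 2 *
          ∫ x, ⟪u, x⟫ ^ (2 * p) * ⟪v, x⟫ ^ (2 * q) ∂stdGaussian E := by ring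
  induction p with
  | zero =>
    rw [integral_inner_pow_succ_mul_inner_pow, Nat.add_sub_cancel, hsplit 0]
    have := heven 0
    simp only [mul_zero, Nat.cast_zero, zero_mul, zero_add] at this ⊢
    positivity
  | succ p ih =>
    rw [integral_inner_pow_succ_mul_inner_pow, Nat.add_sub_cancel, hsplit]
    have := heven (p + 1)
    exact add_nonneg (mul_nonneg (by positivity) ih) (by positivity)

theorem integral_inner_pow_mul_integral_inner_pow_le (u v : E) (p q : ℕ) :
    (∫ x, ⟪u, x⟫ ^ (2 * p) ∂stdGaussian E) * ∫ x, ⟪v, x⟫ ^ (2 * q) ∂stdGaussian E ≤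
      ∫ x, ⟪u, x⟫ ^ (2 * p) * ⟪v, x⟫ ^ (2 * q) ∂stdGaussian E := by
  rcases q with _ | q
  · simp
  induction p with
  | zero => simp
  | succ p ih =>
    have hodd := inner_mul_integral_odd_pow_mul_odd_pow_nonneg u v p q
    have hstein := integral_inner_pow_succ_mul_inner_pow u v (2 * p + 1) (2 * (q + 1))
    rw [Nat.add_sub_cancel, show 2 * (q + 1) - 1 = 2 * q + 1 by lia, mul_assoc _ ⟪u, v⟫] at hstein
    rw [mul_add_one, hstein, integral_inner_pow_add_two, mul_assoc]
    push_cast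
    exact (mul_le_mul_of_nonneg_left ih (by positivity)).trans
      (le_add_of_nonneg_right (by positivity))

lemma norm_mem_finiteMoments : (‖·‖) ∈ finiteMoments (stdGaussian E) :=
  fun p hp ↦ (IsGaussian.memLp_id (stdGaussian E) p hp).norm

lemma continuousOn_mixedMoment (a b c : ℝ) (i j k : ℕ) :
    ContinuousOn (fun z : E × E × E ↦ mixedMoment z.1 z.2.1 z.2.2 i j k)
      (Metric.sphere 0 a ×ˢ Metric.sphere 0 b ×ˢ Metric.sphere 0 c) := by
  have hbound (z x : E) (r : ℝ) (n : ℕ) (hz : z ∈ Metric.sphere 0 r) :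
      ‖⟪z, x⟫ ^ n‖ ≤ (r * ‖x‖) ^ n := by
    rw [norm_pow, ← mem_sphere_zero_iff_norm.1 hz]
    gcongr
    exact norm_inner_le_norm z x
  refine continuousOn_of_dominated
    (bound := fun x ↦ (a * ‖x‖) ^ i * (b * ‖x‖) ^ j * (c * ‖x‖) ^ k)
    (fun z _ ↦ (by fun_prop)) (fun z hz ↦ ae_of_all _ fun x ↦ ?_) ?_
    (ae_of_all _ fun x ↦ by fun_prop)
  · exact norm_mul_le_of_le (norm_mul_le_of_le (hbound _ x a i hz.1) (hbound _ x b j hz.2.1))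
      (hbound _ x c k hz.2.2)
  · have hmem (r : ℝ) (n : ℕ) : (fun x : E ↦ (r * ‖x‖) ^ n) ∈ finiteMoments (stdGaussian E) :=
      pow_mem (Subalgebra.smul_mem _ norm_mem_finiteMoments r) n
    exact integrable_of_mem_finiteMoments (mul_mem (mul_mem (hmem a i) (hmem b j)) (hmem c k))

lemma exists_forall_mixedMoment_le (u v w : E) (i j k : ℕ) :
    ∃ u' v' w' : E, ‖u'‖ = ‖u‖ ∧ ‖v'‖ = ‖v‖ ∧ ‖w'‖ = ‖w‖ ∧
      ∀ x y z : E, ‖x‖ = ‖u‖ → ‖y‖ = ‖v‖ → ‖z‖ = ‖w‖ →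
        mixedMoment u' v' w' i j k ≤ mixedMoment x y z i j k := by
  have hcompact (r : ℝ) : IsCompact (Metric.sphere (0 : E) r) := isCompact_sphere 0 r
  obtain ⟨⟨u', v', w'⟩, hmem, hmin⟩ :=
    ((hcompact ‖u‖).prod ((hcompact ‖v‖).prod (hcompact ‖w‖))).exists_isMinOn
      ⟨(u, v, w), by simp⟩ (continuousOn_mixedMoment ‖u‖ ‖v‖ ‖w‖ i j k)
  simp only [Set.mem_prod, mem_sphere_zero_iff_norm] at hmem
  refine ⟨u', v', w', hmem.1, hmem.2.1, hmem.2.2, fun x y z hx hy hz ↦ ?_⟩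
  exact isMinOn_iff.1 hmin (x, y, z) (by simp [hx, hy, hz])

lemma integral_inner_pow_mul_inner_mul_eq_zero {φ : E → ℝ}
    (hφ : φ ∈ finiteMoments (stdGaussian E)) {u e : E} {n : ℕ} (hu : u ≠ 0)
    (hmin : ∀ z : E, ‖z‖ = ‖u‖ → ∫ x, ⟪u, x⟫ ^ (n + 1) * φ x ∂stdGaussian E ≤
      ∫ x, ⟪z, x⟫ ^ (n + 1) * φ x ∂stdGaussian E) (he : ⟪u, e⟫ = 0) :
    ∫ x, ⟪u, x⟫ ^ n * ⟪e, x⟫ * φ x ∂stdGaussian E = 0 := by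
  wlog hnorm : ‖e‖ = ‖u‖ generalizing e
  · rcases eq_or_ne e 0 with rfl | he0
    · simp
    have hscaled := this (e := (‖u‖ / ‖e‖) • e) (by simp [real_inner_smul_right, he])
      (by simp [norm_smul, norm_ne_zero_iff.2 he0])
    have hpull (x : E) : ⟪u, x⟫ ^ n * ⟪(‖u‖ / ‖e‖) • e, x⟫ * φ x =
        ‖u‖ / ‖e‖ * (⟪u, x⟫ ^ n * ⟪e, x⟫ * φ x) := by
      rw [real_inner_smul_left]
      ring
    simpa only [hpull, integral_const_mul, mul_eq_zero, div_eq_zero_iff, norm_eq_zero, hu, he0,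
      false_or] using hscaled
  have hderiv := hasDerivAt_integral_cos_mul_add_sin_mul_pow (inner_mem_finiteMoments u)
    (inner_mem_finiteMoments e) hφ n
  have hlocal : IsLocalMin (fun t ↦
      ∫ x, (cos t * ⟪u, x⟫ + sin t * ⟪e, x⟫) ^ (n + 1) * φ x ∂stdGaussian E) 0 :=
    .of_forall fun t ↦ by
      simpa [inner_add_left, real_inner_smul_left] using
        hmin _ (norm_cos_smul_add_sin_smul he hnorm t)
  have hzero := hlocal.hasDerivAt_eq_zero hderiv
  exact (mul_eq_zero.1 hzero).resolve_left (by positivity)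

lemma stein_relation_of_minimizer {u v w : E} {i j k : ℕ} (hu : u ≠ 0)
    (hmin : ∀ z : E, ‖z‖ = ‖u‖ →
      mixedMoment u v w (i + 1) (j + 1) (k + 1) ≤ mixedMoment z v w (i + 1) (j + 1) (k + 1))
    {e : E} (he : ⟪u, e⟫ = 0) :
    (j + 1) * mixedMoment u v w i j (k + 1) * ⟪e, v⟫ +
      (k + 1) * mixedMoment u v w i (j + 1) k * ⟪e, w⟫ = 0 := by
  have hmem : (fun x ↦ ⟪v, x⟫ ^ (j + 1) * ⟪w, x⟫ ^ (k + 1)) ∈ finiteMoments (stdGaussian E) :=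
    mul_mem (pow_mem (inner_mem_finiteMoments v) _) (pow_mem (inner_mem_finiteMoments w) _)
  have hcrit := integral_inner_pow_mul_inner_mul_eq_zero hmem (n := i) (e := e) hu
    (by simpa only [mixedMoment, mul_assoc] using hmin) he
  have hstein := integral_inner_mul_monomial e u v w i (j + 1) (k + 1)
  have hcomm (x : E) : ⟪u, x⟫ ^ i * ⟪e, x⟫ * (⟪v, x⟫ ^ (j + 1) * ⟪w, x⟫ ^ (k + 1)) =
      ⟪e, x⟫ * (⟪u, x⟫ ^ i * ⟪v, x⟫ ^ (j + 1) * ⟪w, x⟫ ^ (k + 1)) := by ring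
  simp only [hcomm, hstein, real_inner_comm u e, he, Nat.add_sub_cancel] at hcrit
  push_cast at hcrit
  linear_combination hcrit

lemma mul_mixedMoment_succ_right_of_smul_eq {u v w : E} {a b c : ℝ}
    (h : c • w = a • u + b • v) (i j k : ℕ) :
    c * mixedMoment u v w i j (k + 1) =
      a * mixedMoment u v w (i + 1) j k + b * mixedMoment u v w i (j + 1) k := by
  have hL1 (i j k : ℕ) := integrable_of_mem_finiteMoments (monomial_mem_finiteMoments u v w i j k)
  simp only [mixedMoment, ← integral_const_mul]
  rw [← integral_add ((hL1 _ _ _).const_mul _) ((hL1 _ _ _).const_mul _)]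
  refine integral_congr_ae (ae_of_all _ fun x ↦ ?_)
  have hx : c * ⟪w, x⟫ = a * ⟪u, x⟫ + b * ⟪v, x⟫ := by
    simpa only [inner_add_left, real_inner_smul_left] using congrArg (⟪·, x⟫) h
  linear_combination (⟪u, x⟫ ^ i * ⟪v, x⟫ ^ j * ⟪w, x⟫ ^ k) * hx

lemma mixedMoment_eq_zero_of_stein_relations {u v w : E} {i j k : ℕ}
    (huv : u ∉ ℝ ∙ v) (hwu : w ∉ ℝ ∙ u)
    (hleft : ∀ e : E, ⟪u, e⟫ = 0 → (j + 1) * mixedMoment u v w i j (k + 1) * ⟪e, v⟫ +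
      (k + 1) * mixedMoment u v w i (j + 1) k * ⟪e, w⟫ = 0)
    (hmid : ∀ e : E, ⟪v, e⟫ = 0 → (i + 1) * mixedMoment u v w i j (k + 1) * ⟪e, u⟫ +
      (k + 1) * mixedMoment u v w (i + 1) j k * ⟪e, w⟫ = 0) :
    mixedMoment u v w i (j + 1) k = 0 := by
  by_contra hzero
  obtain ⟨C, hC⟩ : ∃ C, C = (k + 1) * mixedMoment u v w i (j + 1) k := ⟨_, rfl⟩
  have hC0 : C ≠ 0 := hC ▸ mul_ne_zero (by positivity) hzero
  obtain ⟨a, ha⟩ : ∃ a : ℝ, a • u = ((j + 1) * mixedMoment u v w i j (k + 1)) • v + C • w := by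
    rw [← Submodule.mem_span_singleton, mem_span_singleton_iff_forall_inner_eq_zero]
    simpa only [inner_add_right, real_inner_smul_right, hC] using hleft
  have hw : C • w = a • u + (-((j + 1) * mixedMoment u v w i j (k + 1))) • v := by
    rw [ha, neg_smul]
    abel
  obtain ⟨e, hve, heu⟩ : ∃ e : E, ⟪v, e⟫ = 0 ∧ ⟪e, u⟫ ≠ 0 := by
    simpa only [mem_span_singleton_iff_forall_inner_eq_zero, not_forall, exists_prop] using huv
  have hew : C * ⟪e, w⟫ = a * ⟪e, u⟫ := by
    have := congrArg (⟪e, ·⟫) hw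
    simp only [inner_add_right, real_inner_smul_right, real_inner_comm v e, hve] at this
    linear_combination this
  have hfactor : C * (i + 1) * mixedMoment u v w i j (k + 1) +
      (k + 1) * a * mixedMoment u v w (i + 1) j k = 0 := by
    refine (mul_eq_zero.1 ?_).resolve_right heu
    linear_combination C * hmid e hve - (k + 1) * mixedMoment u v w (i + 1) j k * hew
  have hexpand := mul_mixedMoment_succ_right_of_smul_eq hw i j k
  have hvanish : C * (i + j + k + 3) * mixedMoment u v w i j (k + 1) = 0 := by
    linear_combination hfactor + (k + 1) * hexpand +
      (j + 1) * mixedMoment u v w i j (k + 1) * hC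
  have hCw : C • w = a • u := by
    simpa [(mul_eq_zero.1 hvanish).resolve_left (mul_ne_zero hC0 (by positivity))] using hw
  exact hwu (((ℝ ∙ u).smul_mem_iff hC0).1 (hCw ▸ Submodule.smul_mem _ _
    (Submodule.mem_span_singleton_self u)))

lemma mixedMoment_eq_zero_of_minimizer {u v w : E} {i j k : ℕ}
    (hu : u ≠ 0) (hvu : v ∉ ℝ ∙ u) (hwu : w ∉ ℝ ∙ u)
    (hmin_left : ∀ z : E, ‖z‖ = ‖u‖ →
      mixedMoment u v w (i + 1) (j + 1) (k + 1) ≤ mixedMoment z v w (i + 1) (j + 1) (k + 1))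
    (hmin_mid : ∀ z : E, ‖z‖ = ‖v‖ →
      mixedMoment u v w (i + 1) (j + 1) (k + 1) ≤ mixedMoment u z w (i + 1) (j + 1) (k + 1)) :
    mixedMoment u v w i (j + 1) k = 0 := by
  have hv : v ≠ 0 := fun h ↦ hvu (h ▸ zero_mem _)
  have huv : u ∉ ℝ ∙ v := by
    rintro h
    obtain ⟨c, rfl⟩ := Submodule.mem_span_singleton.1 h
    exact hvu ((Submodule.smul_mem_iff _ (left_ne_zero_of_smul hu)).1
      (Submodule.mem_span_singleton_self _))
  refine mixedMoment_eq_zero_of_stein_relations huv hwu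
    (fun e he ↦ stein_relation_of_minimizer hu hmin_left he) fun e he ↦ ?_
  have h := stein_relation_of_minimizer (v := u) (w := w) (i := j) (j := i) (k := k) hv
    (fun z hz ↦ by simpa only [mixedMoment_swap_left _ u] using! hmin_mid z hz) he
  rwa [mixedMoment_swap_left v, mixedMoment_swap_left v] at h

lemma mixedMoment_add_two_of_minimizer {u v w : E} {i j k : ℕ} (hu : u ≠ 0)
    (hvu : v ∉ ℝ ∙ u) (hwu : w ∉ ℝ ∙ u)
    (hmin : ∀ x y z : E, ‖x‖ = ‖u‖ → ‖y‖ = ‖v‖ → ‖z‖ = ‖w‖ →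
      mixedMoment u v w (i + 2) (j + 1) (k + 1) ≤ mixedMoment x y z (i + 2) (j + 1) (k + 1)) :
    mixedMoment u v w (i + 2) (j + 1) (k + 1) =
      (i + 1) * ‖u‖ ^ 2 * mixedMoment u v w i (j + 1) (k + 1) := by
  have hright : mixedMoment u v w (i + 1) (j + 1) k = 0 :=
    mixedMoment_eq_zero_of_minimizer hu hvu hwu (fun z hz ↦ hmin z v w hz rfl rfl)
      fun z hz ↦ hmin u z w rfl hz rfl
  have hmid : mixedMoment u v w (i + 1) j (k + 1) = 0 := by
    rw [mixedMoment_swap_right]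
    refine mixedMoment_eq_zero_of_minimizer hu hwu hvu (fun z hz ↦ ?_) fun z hz ↦ ?_
    · simpa only [mixedMoment_swap_right _ w] using hmin z v w hz rfl rfl
    · simpa only [mixedMoment_swap_right _ _ v] using hmin u v z rfl rfl hz
  rw [mixedMoment_succ_left, Nat.add_sub_cancel, Nat.add_sub_cancel, Nat.add_sub_cancel, hright,
    hmid]
  push_cast
  ring

lemma integral_mul_integral_mul_integral_le_mixedMoment_of_mem_span {u v : E} (w : E)
    (hv : v ∈ ℝ ∙ u) (p q r : ℕ) :
    (∫ x, ⟪u, x⟫ ^ (2 * p) ∂stdGaussian E) * (∫ x, ⟪v, x⟫ ^ (2 * q) ∂stdGaussian E) *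
      (∫ x, ⟪w, x⟫ ^ (2 * r) ∂stdGaussian E) ≤ mixedMoment u v w (2 * p) (2 * q) (2 * r) := by
  obtain ⟨c, rfl⟩ := Submodule.mem_span_singleton.1 hv
  have hmerge (x : E) : ⟪u, x⟫ ^ (2 * p) * ⟪c • u, x⟫ ^ (2 * q) =
      c ^ (2 * q) * ⟪u, x⟫ ^ (2 * (p + q)) := by
    rw [real_inner_smul_left]
    ring
  calc
    _ ≤ (c ^ (2 * q) * ∫ x, ⟪u, x⟫ ^ (2 * (p + q)) ∂stdGaussian E) *
        ∫ x, ⟪w, x⟫ ^ (2 * r) ∂stdGaussian E := by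
      have h := integral_inner_pow_mul_integral_inner_pow_le u (c • u) p q
      simp only [hmerge, integral_const_mul] at h
      refine mul_le_mul_of_nonneg_right h (integral_nonneg fun x ↦ ?_)
      simp only [pow_mul]
      positivity
    _ ≤ c ^ (2 * q) * ∫ x, ⟪u, x⟫ ^ (2 * (p + q)) * ⟪w, x⟫ ^ (2 * r) ∂stdGaussian E := by
      rw [mul_assoc]
      exact mul_le_mul_of_nonneg_left (integral_inner_pow_mul_integral_inner_pow_le u w (p + q) r)
        (by rw [pow_mul]; positivity)
    _ = mixedMoment u (c • u) w (2 * p) (2 * q) (2 * r) := by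
      simp only [mixedMoment, hmerge, mul_assoc, integral_const_mul]

theorem integral_mul_integral_mul_integral_le_mixedMoment (u v w : E) (p q r : ℕ) :
    (∫ x, ⟪u, x⟫ ^ (2 * p) ∂stdGaussian E) * (∫ x, ⟪v, x⟫ ^ (2 * q) ∂stdGaussian E) *
      (∫ x, ⟪w, x⟫ ^ (2 * r) ∂stdGaussian E) ≤ mixedMoment u v w (2 * p) (2 * q) (2 * r) := by
  induction p generalizing u v w with
  | zero => simpa [mixedMoment] using integral_inner_pow_mul_integral_inner_pow_le v w q r
  | succ p ih =>
    rcases q with _ | q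
    · simpa [mixedMoment] using integral_inner_pow_mul_integral_inner_pow_le u w (p + 1) r
    rcases r with _ | r
    · simpa [mixedMoment] using integral_inner_pow_mul_integral_inner_pow_le u v (p + 1) (q + 1)
    obtain ⟨u', v', w', hu, hv, hw, hmin⟩ :=
      exists_forall_mixedMoment_le u v w (2 * (p + 1)) (2 * (q + 1)) (2 * (r + 1))
    refine le_trans ?_ (hmin u v w rfl rfl rfl)
    simp only [integral_inner_pow_two_mul, ← hu, ← hv, ← hw] at hmin ⊢
    simp only [← integral_inner_pow_two_mul]
    rcases eq_or_ne u' 0 with rfl | hu0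
    · simpa [mul_add_one, pow_succ] using
        mixedMoment_even_nonneg 0 v' w' (p + 1) (q + 1) (r + 1)
    by_cases hvu : v' ∈ ℝ ∙ u'
    · exact integral_mul_integral_mul_integral_le_mixedMoment_of_mem_span w' hvu _ _ _
    by_cases hwu : w' ∈ ℝ ∙ u'
    · rw [mul_right_comm, mixedMoment_swap_right]
      exact integral_mul_integral_mul_integral_le_mixedMoment_of_mem_span v' hwu _ _ _
    calc
      _ = ((2 * p : ℕ) + 1) * ‖u'‖ ^ 2 * ((∫ x, ⟪u', x⟫ ^ (2 * p) ∂stdGaussian E) *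
          (∫ x, ⟪v', x⟫ ^ (2 * (q + 1)) ∂stdGaussian E) *
          ∫ x, ⟪w', x⟫ ^ (2 * (r + 1)) ∂stdGaussian E) := by
        rw [mul_add_one, integral_inner_pow_add_two]
        push_cast
        ring
      _ ≤ ((2 * p : ℕ) + 1) * ‖u'‖ ^ 2 *
          mixedMoment u' v' w' (2 * p) (2 * (q + 1)) (2 * (r + 1)) := by
        gcongr
        exact ih u' v' w'
      _ = _ := (mixedMoment_add_two_of_minimizer hu0 hvu hwu hmin).symm

end MixedMoments

section NegativePower

open scoped RealInnerProductSpace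

lemma integrable_abs_rpow_gaussianReal {v : ℝ≥0} (hv : v ≠ 0) {s : ℝ} (hs : -1 < s) :
    Integrable (fun x ↦ |x| ^ s) (gaussianReal 0 v) := by
  have hb : 0 < (2 * v : ℝ)⁻¹ := by positivity
  have h : Integrable fun x : ℝ ↦ |x| ^ s * exp (-(2 * v : ℝ)⁻¹ * |x| ^ (2 : ℝ)) := by
    refine .of_integral_ne_zero ?_
    rw [integral_comp_abs (f := fun x ↦ x ^ s * exp (-(2 * v : ℝ)⁻¹ * x ^ (2 : ℝ))),
      integral_rpow_mul_exp_neg_mul_rpow two_pos hs hb]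
    have : 0 < Gamma ((s + 1) / 2) := Gamma_pos_of_pos (by linarith)
    positivity
  refine (integrable_gaussianReal_iff hv).2 ((h.const_mul (√(2 * π * v))⁻¹).congr
    (ae_of_all _ fun x ↦ ?_))
  simp only [gaussianPDFReal, rpow_ofNat, sq_abs]
  ring_nf

variable {E : Type*} [NormedAddCommGroup E] [InnerProductSpace ℝ E]
variable [FiniteDimensional ℝ E] [MeasurableSpace E] [BorelSpace E]

lemma measurePreserving_inner_stdGaussian {a : E} (ha : a ≠ 0) :
    MeasurePreserving (fun x ↦ ⟪a, x⟫) (stdGaussian E) (gaussianReal 0 (‖a‖₊ ^ 2)) := by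
  refine ⟨by fun_prop, ?_⟩
  rw [← (measurePreserving_updateAlong a).map_eq, Measure.map_map (by fun_prop) (by fun_prop)]
  simp only [Function.comp_def, inner_updateAlong ha]
  exact measurePreserving_fst.map_eq

lemma integrable_abs_inner_rpow_neg_mul {a : E} (ha : a ≠ 0) {s : ℝ} (hs : s ∈ Set.Ioo (0 : ℝ) 1)
    {f : E → ℝ} (hf : f ∈ finiteMoments (stdGaussian E)) :
    Integrable (fun x ↦ |⟪a, x⟫| ^ (-s) * f x) (stdGaussian E) := by
  obtain ⟨p, hp, hps⟩ := exists_between (one_lt_inv₀ hs.1 |>.2 hs.2)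
  have hpq := (Real.HolderConjugate.conjExponent hp).ennrealOfReal
  have hpow : MemLp (fun x ↦ |⟪a, x⟫| ^ (-s)) (ENNReal.ofReal p) (stdGaussian E) := by
    have hp0 := one_pos.trans hp
    have hmeas : Measurable fun x ↦ |⟪a, x⟫| ^ (-s) := by fun_prop
    rw [← integrable_norm_rpow_iff hmeas.aestronglyMeasurable (by simpa using hp0)
      ENNReal.ofReal_ne_top, ENNReal.toReal_ofReal hp0.le]
    have hsp : -1 < -s * p := by
      have := (lt_mul_inv_iff₀ hs.1).1 (by rwa [one_mul] : p < 1 * s⁻¹)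
      linarith
    refine ((measurePreserving_inner_stdGaussian ha).integrable_comp_of_integrable
      (integrable_abs_rpow_gaussianReal (by simpa using ha) hsp)).congr (ae_of_all _ fun x ↦ ?_)
    simp only [Function.comp_apply, norm_eq_abs, abs_rpow_of_nonneg (abs_nonneg _), abs_abs,
      rpow_mul (abs_nonneg _)]
  exact hpow.integrable_mul (hf (ENNReal.ofReal p.conjExponent) ENNReal.ofReal_ne_top)

lemma integral_inner_starProjection_orthogonal_pow (a u : E) (p : ℕ) :
    ∫ x, ⟪(ℝ ∙ a)ᗮ.starProjection u, x⟫ ^ (2 * p) ∂stdGaussian E =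
      (1 - (⟪a, u⟫ / (‖a‖ * ‖u‖)) ^ 2) ^ p * ∫ x, ⟪u, x⟫ ^ (2 * p) ∂stdGaussian E := by
  rw [integral_inner_pow_two_mul, integral_inner_pow_two_mul, pow_mul,
    norm_sq_starProjection_orthogonal_singleton, pow_mul ‖u‖, mul_left_comm, ← mul_pow]
  congr 2
  rcases eq_or_ne u 0 with rfl | hu
  · simp
  · have := norm_ne_zero_iff.2 hu
    rw [div_pow, mul_pow]
    field_simp

lemma prod_integral_starProjection_le (a : E) (c : ℝ) (u : Fin 3 → E) (m : Fin 3 → ℕ) :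
    ∏ i, ∫ x, ⟪(ℝ ∙ a)ᗮ.starProjection (u i), x⟫ ^ (2 * m i) ∂stdGaussian E ≤
      ∫ x, ∏ i, ⟪u i, scaleAlong a c x⟫ ^ (2 * m i) ∂stdGaussian E := by
  calc
    _ ≤ ∏ i, ∫ x, ⟪scaleAlong a c (u i), x⟫ ^ (2 * m i) ∂stdGaussian E := by
      refine Finset.prod_le_prod (fun i _ ↦ ?_) fun i _ ↦ ?_ <;>
        simp only [integral_inner_pow_two_mul]
      · positivity
      · gcongr
        exact norm_starProjection_orthogonal_le_norm_scaleAlong a (u i) c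
    _ ≤ _ := by
      simpa only [Fin.prod_univ_three, mixedMoment, inner_scaleAlong_left] using
        integral_mul_integral_mul_integral_le_mixedMoment (scaleAlong a c (u 0))
          (scaleAlong a c (u 1)) (scaleAlong a c (u 2)) (m 0) (m 1) (m 2)

theorem prod_integral_starProjection_mul_integral_abs_inner_rpow_neg_le {a : E} (ha : a ≠ 0)
    {s : ℝ} (hs : s ∈ Set.Ioo (0 : ℝ) 1) (u : Fin 3 → E) (m : Fin 3 → ℕ) :
    (∏ i, ∫ x, ⟪(ℝ ∙ a)ᗮ.starProjection (u i), x⟫ ^ (2 * m i) ∂stdGaussian E) *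
        ∫ x, |⟪a, x⟫| ^ (-s) ∂stdGaussian E ≤
      ∫ x, |⟪a, x⟫| ^ (-s) * ∏ i, ⟪u i, x⟫ ^ (2 * m i) ∂stdGaussian E := by
  have hprod_mem (w : Fin 3 → E) :
      (fun x ↦ ∏ i, ⟪w i, x⟫ ^ (2 * m i)) ∈ finiteMoments (stdGaussian E) := by
    simpa only [Finset.prod_fn, Pi.pow_def] using
      prod_mem fun i (_ : i ∈ Finset.univ) ↦ pow_mem (inner_mem_finiteMoments (w i)) (2 * m i)
  have hprod_nonneg (x : E) : 0 ≤ ∏ i, ⟪u i, x⟫ ^ (2 * m i) :=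
    Finset.prod_nonneg fun i _ ↦ by rw [pow_mul]; positivity
  have hpow_nonneg (x : E) : 0 ≤ |⟪a, x⟫| ^ (-s) := by positivity
  have hpow_int : Integrable (fun x ↦ |⟪a, x⟫| ^ (-s)) (stdGaussian E) := by
    simpa using integrable_abs_inner_rpow_neg_mul ha hs (one_mem (finiteMoments (stdGaussian E)))
  have h := mul_lintegral_abs_inner_rpow_neg_le ha hs.1
    (F := fun x ↦ ENNReal.ofReal (∏ i, ⟪u i, x⟫ ^ (2 * m i))) (by fun_prop)
    (K := ENNReal.ofReal
      (∏ i, ∫ x, ⟪(ℝ ∙ a)ᗮ.starProjection (u i), x⟫ ^ (2 * m i) ∂stdGaussian E))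
    fun c _ ↦ ?_
  · simp only [← ENNReal.ofReal_mul (hpow_nonneg _)] at h
    rwa [← ofReal_integral_eq_lintegral_ofReal hpow_int (ae_of_all _ hpow_nonneg),
      ← ofReal_integral_eq_lintegral_ofReal
        (integrable_abs_inner_rpow_neg_mul ha hs (hprod_mem u))
        (ae_of_all _ fun x ↦ mul_nonneg (hpow_nonneg x) (hprod_nonneg x)),
      ← ENNReal.ofReal_mul' (integral_nonneg hpow_nonneg), ENNReal.ofReal_le_ofReal_iff
        (integral_nonneg fun x ↦ mul_nonneg (hpow_nonneg x) (hprod_nonneg x))] at h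
  · rw [← ofReal_integral_eq_lintegral_ofReal _ (ae_of_all _ fun x ↦ hprod_nonneg _)]
    · exact ENNReal.ofReal_le_ofReal (prod_integral_starProjection_le a c u m)
    · simpa only [inner_scaleAlong_left] using integrable_of_mem_finiteMoments
        (hprod_mem fun i ↦ scaleAlong a c (u i))

end NegativePower

section GaussianLaw

open scoped RealInnerProductSpace MatrixOrder

variable {ι Ω : Type*} [Fintype ι] [MeasurableSpace Ω] {μ : Measure Ω} [IsProbabilityMeasure μ]
  {X : Ω → ι → ℝ} {S : Matrix ι ι ℝ}

lemma posSemidef_of_integral_exp_eq (hS : S.IsSymm)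
    (hX : ∀ u : ι → ℝ, ∫ ω, Complex.exp (Complex.I * ((u ⬝ᵥ X ω : ℝ) : ℂ)) ∂μ =
      Complex.exp (-((u ⬝ᵥ S *ᵥ u : ℝ) : ℂ) / 2)) : S.PosSemidef := by
  refine .of_dotProduct_mulVec_nonneg hS fun u ↦ ?_
  have h := norm_integral_le_integral_norm (μ := μ)
    (fun ω ↦ Complex.exp (Complex.I * ((u ⬝ᵥ X ω : ℝ) : ℂ)))
  rw [hX u, ← Complex.ofReal_neg, ← Complex.ofReal_ofNat, ← Complex.ofReal_div,
    Complex.norm_exp_ofReal] at h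
  simp only [mul_comm Complex.I, Complex.norm_exp_ofReal_mul_I, integral_const, probReal_univ,
    one_smul, exp_le_one_iff] at h
  rw [star_trivial]
  linarith

lemma map_toLp_eq_multivariateGaussian [DecidableEq ι] (hXm : Measurable X) (hS : S.PosSemidef)
    (hX : ∀ u : ι → ℝ, ∫ ω, Complex.exp (Complex.I * ((u ⬝ᵥ X ω : ℝ) : ℂ)) ∂μ =
      Complex.exp (-((u ⬝ᵥ S *ᵥ u : ℝ) : ℂ) / 2)) :
    μ.map (fun ω ↦ WithLp.toLp 2 (X ω)) = multivariateGaussian 0 S := by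
  refine Measure.ext_of_charFun (funext fun u ↦ ?_)
  rw [charFun_multivariateGaussian hS, charFun_apply, integral_map (by fun_prop) (by fun_prop),
    inner_zero_right, Complex.ofReal_zero, zero_mul, zero_sub, ← neg_div, ← hX]
  simp only [EuclideanSpace.inner_eq_star_dotProduct, star_trivial, mul_comm Complex.I]

lemma exists_gram_eq_and_multivariateGaussian_eq_map [DecidableEq ι] (hS : S.PosSemidef) :
    ∃ a : ι → EuclideanSpace ℝ ι, gram ℝ a = S ∧
      multivariateGaussian 0 S = (stdGaussian (EuclideanSpace ℝ ι)).map
        (fun x ↦ WithLp.toLp 2 fun i ↦ ⟪a i, x⟫) := by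
  set T := toEuclideanCLM (𝕜 := ℝ) (CFC.sqrt S) with hT
  have hself : IsSelfAdjoint T := (CFC.sqrt_nonneg S).isSelfAdjoint.map _
  have hcoord (i : ι) (x : EuclideanSpace ℝ ι) :
      ⟪T (EuclideanSpace.single i 1), x⟫ = T x i := by
    refine (hself.isSymmetric _ x).trans ?_
    simp [EuclideanSpace.inner_single_left]
  refine ⟨fun i ↦ T (EuclideanSpace.single i 1), ?_, ?_⟩
  · ext i j
    rw [gram_apply, hcoord, ← mul_apply_eq_comp, hT, ← map_mul,
      CFC.sqrt_mul_sqrt_self _ hS.nonneg]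
    simp
  · simp only [multivariateGaussian, zero_add, hcoord]
    rfl

theorem exists_gram_eq_and_map_eq_map_stdGaussian (hXm : Measurable X) (hS : S.IsSymm)
    (hX : ∀ u : ι → ℝ, ∫ ω, Complex.exp (Complex.I * ((u ⬝ᵥ X ω : ℝ) : ℂ)) ∂μ =
      Complex.exp (-((u ⬝ᵥ S *ᵥ u : ℝ) : ℂ) / 2)) :
    ∃ a : ι → EuclideanSpace ℝ ι, gram ℝ a = S ∧
      μ.map X = (stdGaussian (EuclideanSpace ℝ ι)).map (fun x i ↦ ⟪a i, x⟫) := by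
  classical
  have hpsd := posSemidef_of_integral_exp_eq hS hX
  obtain ⟨a, hgram, hmap⟩ := exists_gram_eq_and_multivariateGaussian_eq_map hpsd
  refine ⟨a, hgram, ?_⟩
  have h := congrArg (Measure.map WithLp.ofLp)
    ((map_toLp_eq_multivariateGaussian hXm hpsd hX).trans hmap)
  rwa [Measure.map_map (by fun_prop) (by fun_prop), Measure.map_map (by fun_prop) (by fun_prop)]
    at h

end GaussianLaw

lemma abs_rpow_two_mul_natCast (m : ℕ) (x : ℝ) : |x| ^ (2 * m : ℝ) = x ^ (2 * m) := by
  exact_mod_cast (rpow_natCast |x| (2 * m)).trans ((even_two_mul m).pow_abs x)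

end GaussianProduct

theorem gpi_dim_four_neg_power_even_powers
    {Ω : Type*} [MeasurableSpace Ω] (μ : Measure Ω) [IsProbabilityMeasure μ]
    (X : Ω → (Fin 4 → ℝ)) (hXm : Measurable X)
    (S : Matrix (Fin 4) (Fin 4) ℝ) (hS : S.IsSymm)
    (hGauss : ∀ u : Fin 4 → ℝ,
      ∫ ω, Complex.exp (Complex.I * ((u ⬝ᵥ X ω : ℝ) : ℂ)) ∂μ =
        Complex.exp (-(((u ⬝ᵥ S *ᵥ u : ℝ) : ℂ)) / 2))
    (hvar : ∀ i, 0 < S i i)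
    {α₁ : ℝ} (hα₁ : α₁ ∈ Set.Ioo (0 : ℝ) 1)
    (m : Fin 3 → ℕ) (hm : ∀ i, 0 < m i) :
    (∏ i : Fin 3,
        (1 - (S 0 i.succ / (Real.sqrt (S 0 0) * Real.sqrt (S i.succ i.succ))) ^ 2) ^
          ((2 * m i : ℝ) / 2)) *
      (∫ ω, |X ω 0| ^ (-α₁) ∂μ) *
      ∏ i : Fin 3, ∫ ω, |X ω i.succ| ^ (2 * m i : ℝ) ∂μ ≤
      ∫ ω, |X ω 0| ^ (-α₁) * ∏ i : Fin 3, |X ω i.succ| ^ (2 * m i : ℝ) ∂μ := by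
  obtain ⟨a, rfl, hmap⟩ :=
    GaussianProduct.exists_gram_eq_and_map_eq_map_stdGaussian hXm hS hGauss
  have ha : a 0 ≠ 0 := fun h ↦ by simpa [h] using hvar 0
  have hexpect {g : (Fin 4 → ℝ) → ℝ} (hg : Measurable g) : ∫ ω, g (X ω) ∂μ =
      ∫ x, g (fun i ↦ inner ℝ (a i) x)
        ∂ProbabilityTheory.stdGaussian (EuclideanSpace ℝ (Fin 4)) := by
    rw [← integral_map hXm.aemeasurable hg.aestronglyMeasurable, hmap,
      integral_map (by fun_prop) hg.aestronglyMeasurable]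
  have hmain := GaussianProduct.prod_integral_starProjection_mul_integral_abs_inner_rpow_neg_le
    ha hα₁ (fun i : Fin 3 ↦ a i.succ) m
  simp only [GaussianProduct.integral_inner_starProjection_orthogonal_pow,
    Finset.prod_mul_distrib] at hmain
  simp only [GaussianProduct.abs_rpow_two_mul_natCast, mul_div_cancel_left₀ _ (two_ne_zero' ℝ),
    Real.rpow_natCast, gram_apply, real_inner_self_eq_norm_sq, Real.sqrt_sq (norm_nonneg _)]
  have hmoment (i : Fin 3) := hexpect (g := fun y ↦ y i.succ ^ (2 * m i)) (by fun_prop)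
  rw [hexpect (g := fun y ↦ |y 0| ^ (-α₁)) (by fun_prop),
    hexpect (g := fun y ↦ |y 0| ^ (-α₁) * ∏ i : Fin 3, y i.succ ^ (2 * m i)) (by fun_prop),
    mul_right_comm]
  simpa only [hmoment] using hmain
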